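/- In any nondegenerate triangle, the distance from the nine-point center X5 to the mittenpunkt X9 and the distance from X5 to the Spieker center X10 satisfy dist(X5, X10) ≤ dist(X5, X9) ≤ (7 − 4√2)·dist(X5, X10). -/

import Mathlib

/-- The point with normalized barycentric coordinates `(x : y : z)`
with respect to the triangle `A B C`. -/
noncomputable def bary (A B C : EuclideanSpace ℝ (Fin 2)) (x y z : ℝ) :
    EuclideanSpace ℝ (Fin 2) :=
  (x + y + z)⁻¹ • (x • A + y • B + z • C)

/-- The triangle center with barycentric coordinates
`(f a b c : f b c a : f c a b)` where `a, b, c` are the side lengths. -/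
noncomputable def tcenter (f : ℝ → ℝ → ℝ → ℝ) (A B C : EuclideanSpace ℝ (Fin 2)) :
    EuclideanSpace ℝ (Fin 2) :=
  bary A B C (f (dist B C) (dist C A) (dist A B))
    (f (dist C A) (dist A B) (dist B C))
    (f (dist A B) (dist B C) (dist C A))

/-! The complement map `P ↦ (A + B + C - P) / 2`, a similarity of ratio `1/2`, sends the
circumcenter `O`, the incenter `I` and the Gergonne point `Ge` to `X5`, `X10` and `X9`. The claim is
therefore `OI ≤ OGe ≤ (7 - 4√2) OI`. Leibniz' formula for the squared distance to a weighted mean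
expresses `OI ^ 2` and `OGe ^ 2` through the elementary symmetric functions `p`, `q`, `t` of the
tangent lengths `u`, `v`, `w`, where `BC = v + w`, `CA = w + u`, `AB = u + v`. The lower bound then
follows from `9 t ≤ p q` and `3 p t ≤ q ^ 2`. For the upper bound, the discriminant of
`(X - u)(X - v)(X - w)` shows that, for a given ratio `t / (p q)`, the quotient `q / p ^ 2` is
largest for an isosceles triangle with tangent lengths proportional to `1, 1, s`, `0 < s ≤ 1`. There
`OGe / OI = 1 + 2 / (2 s + 1 / s + 3)`, and `2 s + 1 / s ≥ 2 √2`. -/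

section SymmetricFunctions

lemma nine_mul_prod_le_sum_mul_sum_mul {u v w : ℝ} (hu : 0 ≤ u) (hv : 0 ≤ v) (hw : 0 ≤ w) :
    9 * (u * v * w) ≤ (u + v + w) * (u * v + v * w + w * u) := by
  nlinarith [mul_nonneg hu (sq_nonneg (v - w)), mul_nonneg hv (sq_nonneg (u - w)),
    mul_nonneg hw (sq_nonneg (u - v))]

lemma three_mul_sum_mul_prod_le_sq_sum_mul (u v w : ℝ) :
    3 * (u + v + w) * (u * v * w) ≤ (u * v + v * w + w * u) ^ 2 := by
  nlinarith [sq_nonneg (u * v - v * w), sq_nonneg (v * w - w * u), sq_nonneg (w * u - u * v)]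

/-- The discriminant of the monic cubic `X ^ 3 - p X ^ 2 + q X - t`. -/
def cubicDiscr (p q t : ℝ) : ℝ :=
  p ^ 2 * q ^ 2 - 4 * q ^ 3 - 4 * p ^ 3 * t + 18 * p * q * t - 27 * t ^ 2

lemma cubicDiscr_nonneg_of_roots (u v w : ℝ) :
    0 ≤ cubicDiscr (u + v + w) (u * v + v * w + w * u) (u * v * w) := by
  have : cubicDiscr (u + v + w) (u * v + v * w + w * u) (u * v * w) =
      ((u - v) * (v - w) * (w - u)) ^ 2 := by
    unfold cubicDiscr; ring
  rw [this]
  positivity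

lemma exists_sq_add_one_eq_two_mul {y : ℝ} (hy : 1 ≤ y) :
    ∃ s, 0 < s ∧ s ≤ 1 ∧ s ^ 2 + 1 = 2 * y * s := by
  have hsq : √(y ^ 2 - 1) ^ 2 = y ^ 2 - 1 := Real.sq_sqrt (by nlinarith)
  refine ⟨y - √(y ^ 2 - 1), ?_, ?_, by linear_combination hsq⟩
  · exact sub_pos.2 ((Real.sqrt_lt' (by linarith)).2 (by linarith))
  · linarith [Real.le_sqrt_of_sq_le (show (y - 1) ^ 2 ≤ y ^ 2 - 1 by nlinarith)]

variable {p q t : ℝ}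

lemma exists_isosceles_ratio_eq (ht : 0 < t) (hpqt : 9 * t ≤ p * q) :
    ∃ s, 0 < s ∧ s ≤ 1 ∧ s * (p * q) = t * ((2 + s) * (1 + 2 * s)) := by
  have hy : 1 ≤ (p * q / t - 5) / 4 := by
    have : 9 ≤ p * q / t := (le_div_iff₀ ht).2 hpqt
    linarith
  obtain ⟨s, hs0, hs1, hs⟩ := exists_sq_add_one_eq_two_mul hy
  refine ⟨s, hs0, hs1, ?_⟩
  field_simp at hs
  linear_combination -hs / 2

/- In terms of `k = q / p ^ 2` the discriminant is a negative multiple of a monic quadratic, whose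
roots are the values `(1 + 2 s) / (2 + s) ^ 2` and `s (s + 2) / (1 + 2 s) ^ 2` of `k` at the
isosceles triangles with tangent lengths `1, 1, s` and `1, 1, 1 / s`. -/
lemma mul_sq_le_of_cubicDiscr_nonneg {s : ℝ} (hq : 0 < q) (hs0 : 0 < s) (hs1 : s ≤ 1)
    (hs : s * (p * q) = t * ((2 + s) * (1 + 2 * s))) (hdisc : 0 ≤ cubicDiscr p q t) :
    q * (2 + s) ^ 2 ≤ p ^ 2 * (1 + 2 * s) := by
  set N := (2 + s) * (1 + 2 * s) with hN
  have hfactor : N ^ 2 * cubicDiscr p q t =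
      -4 * q * ((q * (2 + s) ^ 2 - p ^ 2 * (1 + 2 * s)) *
        (q * (1 + 2 * s) ^ 2 - p ^ 2 * (s * (s + 2)))) := by
    have ht : t = s * (p * q) / N := (eq_div_iff (by positivity)).2 hs.symm
    rw [cubicDiscr, ht, hN]
    field_simp
    ring
  have hroots : s * (s + 2) * (2 + s) ^ 2 ≤ (1 + 2 * s) * (1 + 2 * s) ^ 2 := by
    have : 0 ≤ (1 - s) ^ 3 * (1 + s) := by have := sub_nonneg.2 hs1; positivity
    linarith
  by_contra! hlarge
  have hsmall : 0 < q * (1 + 2 * s) ^ 2 - p ^ 2 * (s * (s + 2)) := by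
    refine sub_pos.2 (lt_of_mul_lt_mul_right ?_ (sq_nonneg (2 + s)))
    calc p ^ 2 * (s * (s + 2)) * (2 + s) ^ 2
        ≤ p ^ 2 * (1 + 2 * s) * (1 + 2 * s) ^ 2 := by nlinarith [sq_nonneg p]
      _ < q * (2 + s) ^ 2 * (1 + 2 * s) ^ 2 := by gcongr
      _ = q * (1 + 2 * s) ^ 2 * (2 + s) ^ 2 := by ring
  have : 0 < 4 * q * ((q * (2 + s) ^ 2 - p ^ 2 * (1 + 2 * s)) *
      (q * (1 + 2 * s) ^ 2 - p ^ 2 * (s * (s + 2)))) := by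
    have := sub_pos.2 hlarge; positivity
  have : 0 ≤ N ^ 2 * cubicDiscr p q t := by positivity
  linarith

/-- The squared circumradius of a triangle whose tangent lengths have the elementary symmetric
functions `p`, `q`, `t`: the product of the sides is `p * q - t`, the squared area is `p * t`. -/
noncomputable def circumradiusSq (p q t : ℝ) : ℝ := (p * q - t) ^ 2 / (16 * p * t)

/-- `OI ^ 2` for a triangle whose tangent lengths have the elementary symmetric functions `p`, `q`,
`t`: Euler's `R ^ 2 - 2 R r`. -/
noncomputable def incenterDistSq (p q t : ℝ) : ℝ :=
  circumradiusSq p q t - (p * q - t) / (2 * p)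

/-- `OGe ^ 2` for a triangle whose tangent lengths have the elementary symmetric functions `p`, `q`,
`t`; the subtracted term is the negative of the power of `Ge` with respect to the circumcircle. -/
noncomputable def gergonneDistSq (p q t : ℝ) : ℝ :=
  circumradiusSq p q t - t * (p * q + 3 * t) / q ^ 2

lemma incenterDistSq_le_gergonneDistSq (hp : 0 < p) (hq : 0 < q) (ht : 0 < t)
    (hpqt : 9 * t ≤ p * q) (hptq : 3 * p * t ≤ q ^ 2) :
    incenterDistSq p q t ≤ gergonneDistSq p q t := by
  refine sub_le_sub_left ((div_le_div_iff₀ (by positivity) (by positivity)).2 ?_) _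
  calc t * (p * q + 3 * t) * (2 * p)
      = p * t * (2 * (p * q + 3 * t)) := by ring
    _ ≤ p * t * (3 * (p * q - t)) := mul_le_mul_of_nonneg_left (by linarith) (by positivity)
    _ = 3 * p * t * (p * q - t) := by ring
    _ ≤ q ^ 2 * (p * q - t) := by gcongr; linarith
    _ = (p * q - t) * q ^ 2 := by ring

/-- The quotient `OGe / OI` for the isosceles triangle with tangent lengths `1, 1, s`; at the
equilateral triangle `s = 1`, where `OI = 0`, this is its limit. -/
noncomputable def isoscelesDistRatio (s : ℝ) : ℝ :=
  (2 * s ^ 2 + 5 * s + 1) / (2 * s ^ 2 + 3 * s + 1)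

lemma isoscelesDistRatio_nonneg {s : ℝ} (hs : 0 ≤ s) : 0 ≤ isoscelesDistRatio s := by
  unfold isoscelesDistRatio; positivity

lemma isoscelesDistRatio_le {s : ℝ} (hs : 0 ≤ s) : isoscelesDistRatio s ≤ 7 - 4 * √2 := by
  have hsqrt : √2 ^ 2 = 2 := Real.sq_sqrt zero_le_two
  have hlt : √2 < 3 / 2 := (Real.sqrt_lt' (by norm_num)).2 (by norm_num)
  have amgm : 2 * √2 * s ≤ 2 * s ^ 2 + 1 := by nlinarith [sq_nonneg (√2 * s - 1)]
  refine (div_le_iff₀ (by positivity)).2 ?_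
  have : 0 ≤ (6 - 4 * √2) * (2 * s ^ 2 + 1 - 2 * √2 * s) :=
    mul_nonneg (by linarith) (by linarith)
  linear_combination this + 8 * s * hsqrt

lemma gergonneDistSq_le_isoscelesDistRatio_sq_mul {s : ℝ} (hp : 0 < p) (hq : 0 < q) (hs0 : 0 < s)
    (hs : s * (p * q) = t * ((2 + s) * (1 + 2 * s)))
    (hk : q * (2 + s) ^ 2 ≤ p ^ 2 * (1 + 2 * s)) :
    gergonneDistSq p q t ≤ isoscelesDistRatio s ^ 2 * incenterDistSq p q t := by
  have ht : t = s * (p * q) / ((2 + s) * (1 + 2 * s)) :=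
    (eq_div_iff (by positivity)).2 hs.symm
  have hdiff : isoscelesDistRatio s ^ 2 * incenterDistSq p q t - gergonneDistSq p q t =
      2 * s * (s ^ 2 + 4 * s + 1) * (p ^ 2 * (1 + 2 * s) - q * (2 + s) ^ 2) /
        ((2 + s) ^ 2 * (1 + 2 * s) ^ 3) := by
    have hfactor : 2 * s ^ 2 + 3 * s + 1 = (1 + 2 * s) * (1 + s) := by ring
    rw [isoscelesDistRatio, incenterDistSq, gergonneDistSq, circumradiusSq, ht, hfactor]
    field_simp
    ring
  rw [← sub_nonneg, hdiff]
  have := sub_nonneg.2 hk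
  positivity

lemma exists_gergonneDistSq_le_isoscelesDistRatio_sq_mul (hp : 0 < p) (hq : 0 < q) (ht : 0 < t)
    (hpqt : 9 * t ≤ p * q) (hdisc : 0 ≤ cubicDiscr p q t) :
    ∃ s, 0 < s ∧ gergonneDistSq p q t ≤ isoscelesDistRatio s ^ 2 * incenterDistSq p q t := by
  obtain ⟨s, hs0, hs1, hs⟩ := exists_isosceles_ratio_eq ht hpqt
  exact ⟨s, hs0, gergonneDistSq_le_isoscelesDistRatio_sq_mul hp hq hs0 hs
    (mul_sq_le_of_cubicDiscr_nonneg hq hs0 hs1 hs hdisc)⟩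

end SymmetricFunctions

section InnerProductSpace

variable {V : Type*} [NormedAddCommGroup V] [InnerProductSpace ℝ V]

open Finset in
lemma norm_sum_smul_sq_eq {ι : Type*} (s : Finset ι) (w : ι → ℝ) (d : ι → V) :
    ‖∑ i ∈ s, w i • d i‖ ^ 2 = (∑ i ∈ s, w i) * (∑ i ∈ s, w i * ‖d i‖ ^ 2) -
      (∑ i ∈ s, ∑ j ∈ s, w i * w j * ‖d i - d j‖ ^ 2) / 2 := by
  have hpolar (i j : ι) : w i * (w j * inner ℝ (d i) (d j)) =
      (w i * ‖d i‖ ^ 2 * w j + w i * (w j * ‖d j‖ ^ 2) - w i * w j * ‖d i - d j‖ ^ 2) / 2 := by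
    linear_combination (w i * w j / 2) * norm_sub_sq_real (d i) (d j)
  simp_rw [← real_inner_self_eq_norm_sq (∑ i ∈ s, w i • d i), sum_inner, inner_sum,
    real_inner_smul_left, real_inner_smul_right, hpolar, ← sum_div, sum_sub_distrib,
    sum_add_distrib, ← mul_sum, ← sum_mul]
  ring

lemma dist_centerMass_sq {ι : Type*} {s : Finset ι} {w : ι → ℝ} (p : ι → V) (x : V)
    (hw : ∑ i ∈ s, w i ≠ 0) :
    dist x (s.centerMass w p) ^ 2 = (∑ i ∈ s, w i * dist x (p i) ^ 2) / ∑ i ∈ s, w i -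
      (∑ i ∈ s, ∑ j ∈ s, w i * w j * dist (p i) (p j) ^ 2) / (2 * (∑ i ∈ s, w i) ^ 2) := by
  have hsub : s.centerMass w p - x = (∑ i ∈ s, w i)⁻¹ • ∑ i ∈ s, w i • (p i - x) := by
    simp_rw [Finset.centerMass, smul_sub, Finset.sum_sub_distrib, ← Finset.sum_smul, smul_sub,
      inv_smul_smul₀ hw]
  rw [dist_comm, dist_eq_norm, hsub, norm_smul, mul_pow, norm_sum_smul_sq_eq]
  simp_rw [sub_sub_sub_cancel_right, ← dist_eq_norm, dist_comm x, norm_inv, inv_pow,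
    Real.norm_eq_abs, sq_abs]
  field_simp

/-- The center with barycentric coordinates `(f a b c : f b c a : f c a b)` of a triangle with side
lengths `a, b, c` in a real inner product space. As in `Finset.centerMass`, it is `0` if the sum of
the coordinates vanishes. -/
noncomputable def triangleCenter (f : ℝ → ℝ → ℝ → ℝ) (A B C : V) : V :=
  Finset.univ.centerMass
    ![f (dist B C) (dist C A) (dist A B), f (dist C A) (dist A B) (dist B C),
      f (dist A B) (dist B C) (dist C A)] ![A, B, C]

lemma tcenter_eq_triangleCenter (f : ℝ → ℝ → ℝ → ℝ) (A B C : EuclideanSpace ℝ (Fin 2)) :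
    tcenter f A B C = triangleCenter f A B C := by
  simp [tcenter, bary, triangleCenter, Finset.centerMass, Fin.sum_univ_three]

namespace triangleCenter

lemma rotate (f : ℝ → ℝ → ℝ → ℝ) (A B C : V) :
    triangleCenter f B C A = triangleCenter f A B C := by
  simp only [triangleCenter, Finset.centerMass, Fin.sum_univ_three, Matrix.cons_val]
  congr 1
  · ring
  · abel

/-- The circumcenter `O`. Its weights are the negatives of the customary ones, so that the
complement of `f` below yields exactly the customary weights of the nine-point center. -/
noncomputable def circumcenter (A B C : V) : V :=
  triangleCenter (fun a b c => a ^ 2 * (a ^ 2 - b ^ 2 - c ^ 2)) A B C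

lemma circumcenter_rotate (A B C : V) : circumcenter B C A = circumcenter A B C := rotate _ A B C

/-- The incenter `I`. -/
noncomputable def incenter (A B C : V) : V := triangleCenter (fun a _ _ => a) A B C

/-- The Gergonne point `Ge`; its customary weights `1 / (b + c - a)` are cleared of denominators. -/
noncomputable def gergonnePoint (A B C : V) : V :=
  triangleCenter (fun a b c => (c + a - b) * (a + b - c) / 2) A B C

/-- The nine-point center `X5`. -/
noncomputable def ninePointCenter (A B C : V) : V :=
  triangleCenter (fun a b c => b^4 + c^4 - a^2*b^2 - a^2*c^2 - 2*b^2*c^2) A B C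

/-- The mittenpunkt `X9`. -/
noncomputable def mittenpunkt (A B C : V) : V := triangleCenter (fun a b c => a*(b + c - a)) A B C

/-- The Spieker center `X10`. -/
noncomputable def spiekerCenter (A B C : V) : V := triangleCenter (fun _ b c => b + c) A B C

/-- The sum of the barycentric coordinates given by `f` for a triangle with sides `a, b, c`. -/
def weightSum (f : ℝ → ℝ → ℝ → ℝ) (a b c : ℝ) : ℝ := f a b c + f b c a + f c a b

variable {A B C : V}

lemma dist_sq {f : ℝ → ℝ → ℝ → ℝ} (X : V) {a b c : ℝ} (ha : dist B C = a) (hb : dist C A = b)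
    (hc : dist A B = c) (hf : weightSum f a b c ≠ 0) :
    dist X (triangleCenter f A B C) ^ 2 =
      (f a b c * dist X A ^ 2 + f b c a * dist X B ^ 2 + f c a b * dist X C ^ 2) /
          weightSum f a b c -
        (f b c a * f c a b * a ^ 2 + f c a b * f a b c * b ^ 2 + f a b c * f b c a * c ^ 2) /
          weightSum f a b c ^ 2 := by
  subst ha hb hc
  rw [triangleCenter, dist_centerMass_sq _ _ (by simpa [Fin.sum_univ_three, weightSum] using hf)]
  simp only [Fin.sum_univ_three, Matrix.cons_val, dist_self, weightSum, dist_comm B A,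
    dist_comm A C, dist_comm C B]
  unfold weightSum at hf
  field_simp
  ring

/-- The complement of `P` with respect to the triangle `A B C`, its image under the homothety with
ratio `-1/2` centered at the centroid. -/
noncomputable def complement (A B C P : V) : V := (2⁻¹ : ℝ) • (A + B + C - P)

lemma dist_complement (A B C P Q : V) :
    dist (complement A B C P) (complement A B C Q) = dist P Q / 2 := by
  rw [complement, complement, dist_smul₀, dist_sub_left, Real.norm_of_nonneg (by norm_num),
    inv_mul_eq_div]

lemma complement_triangleCenter {f : ℝ → ℝ → ℝ → ℝ} {a b c : ℝ} (ha : dist B C = a)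
    (hb : dist C A = b) (hc : dist A B = c) (hf : weightSum f a b c ≠ 0) :
    complement A B C (triangleCenter f A B C) =
      triangleCenter (fun a b c => f b c a + f c a b) A B C := by
  simp only [complement, triangleCenter, Finset.centerMass, Fin.sum_univ_three, Matrix.cons_val,
    ha, hb, hc]
  unfold weightSum at hf
  have hsum : f b c a + f c a b + (f c a b + f a b c) + (f a b c + f b c a) =
      2 * (f a b c + f b c a + f c a b) := by ring
  rw [hsum]
  match_scalars <;> field_simp <;> ring

section TangentLengths

lemma exists_tangentLengths (h : AffineIndependent ℝ ![A, B, C]) :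
    ∃ u v w : ℝ, 0 < u ∧ 0 < v ∧ 0 < w ∧
      dist B C = v + w ∧ dist C A = w + u ∧ dist A B = u + v := by
  have hA : dist B C < dist B A + dist A C :=
    dist_lt_dist_add_dist_iff.2 (h.not_wbtw_of_injective 1 0 2 (by decide))
  have hB : dist C A < dist C B + dist B A :=
    dist_lt_dist_add_dist_iff.2 (h.not_wbtw_of_injective 2 1 0 (by decide))
  have hC : dist A B < dist A C + dist C B :=
    dist_lt_dist_add_dist_iff.2 (h.not_wbtw_of_injective 0 2 1 (by decide))
  rw [dist_comm B A, dist_comm A C] at hA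
  rw [dist_comm C B, dist_comm B A] at hB
  rw [dist_comm A C, dist_comm C B] at hC
  refine ⟨(dist C A + dist A B - dist B C) / 2, (dist A B + dist B C - dist C A) / 2,
    (dist B C + dist C A - dist A B) / 2, ?_, ?_, ?_, ?_, ?_, ?_⟩ <;> linarith

lemma circumradiusSq_rotate (u v w : ℝ) :
    circumradiusSq (v + w + u) (v * w + w * u + u * v) (v * w * u) =
      circumradiusSq (u + v + w) (u * v + v * w + w * u) (u * v * w) := by
  congr 1 <;> ring

lemma weightSum_circumcenter (u v w : ℝ) :
    weightSum (fun a b c => a ^ 2 * (a ^ 2 - b ^ 2 - c ^ 2)) (v + w) (w + u) (u + v) =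
      -(16 * (u + v + w) * (u * v * w)) := by
  unfold weightSum; ring

lemma weightSum_incenter (u v w : ℝ) :
    weightSum (fun a _ _ => a) (v + w) (w + u) (u + v) = 2 * (u + v + w) := by
  unfold weightSum; ring

lemma weightSum_gergonnePoint (u v w : ℝ) :
    weightSum (fun a b c => (c + a - b) * (a + b - c) / 2) (v + w) (w + u) (u + v) =
      2 * (u * v + v * w + w * u) := by
  unfold weightSum; ring

variable {u v w : ℝ} (hu : 0 < u) (hv : 0 < v) (hw : 0 < w)
  (ha : dist B C = v + w) (hb : dist C A = w + u) (hc : dist A B = u + v)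

include hu hv hw ha hb hc

lemma complement_circumcenter : complement A B C (circumcenter A B C) = ninePointCenter A B C := by
  have hsum :
      weightSum (fun a b c => a ^ 2 * (a ^ 2 - b ^ 2 - c ^ 2)) (v + w) (w + u) (u + v) ≠ 0 :=
    weightSum_circumcenter u v w ▸ neg_ne_zero.2 (by positivity)
  rw [circumcenter, complement_triangleCenter ha hb hc hsum, ninePointCenter]
  congr 1
  ext a b c
  ring

lemma complement_incenter : complement A B C (incenter A B C) = spiekerCenter A B C :=
  complement_triangleCenter ha hb hc (weightSum_incenter u v w ▸ by positivity)

lemma complement_gergonnePoint :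
    complement A B C (gergonnePoint A B C) = mittenpunkt A B C := by
  rw [gergonnePoint, complement_triangleCenter ha hb hc
    (weightSum_gergonnePoint u v w ▸ by positivity), mittenpunkt]
  congr 1
  ext a b c
  ring

lemma dist_ninePointCenter_spiekerCenter :
    dist (ninePointCenter A B C) (spiekerCenter A B C) =
      dist (circumcenter A B C) (incenter A B C) / 2 := by
  rw [← complement_circumcenter hu hv hw ha hb hc, ← complement_incenter hu hv hw ha hb hc,
    dist_complement]

lemma dist_ninePointCenter_mittenpunkt :
    dist (ninePointCenter A B C) (mittenpunkt A B C) =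
      dist (circumcenter A B C) (gergonnePoint A B C) / 2 := by
  rw [← complement_circumcenter hu hv hw ha hb hc, ← complement_gergonnePoint hu hv hw ha hb hc,
    dist_complement]

lemma dist_circumcenter_vertex_sq :
    dist (circumcenter A B C) A ^ 2 =
      circumradiusSq (u + v + w) (u * v + v * w + w * u) (u * v * w) := by
  have hsum := weightSum_circumcenter u v w
  rw [dist_comm, circumcenter, dist_sq A ha hb hc (hsum ▸ neg_ne_zero.2 (by positivity)), hsum,
    dist_self, hc, dist_comm A C, hb, circumradiusSq]
  field_simp
  ring

lemma dist_circumcenter_triangleCenter_sq {f : ℝ → ℝ → ℝ → ℝ}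
    (hf : weightSum f (v + w) (w + u) (u + v) ≠ 0) :
    dist (circumcenter A B C) (triangleCenter f A B C) ^ 2 =
      circumradiusSq (u + v + w) (u * v + v * w + w * u) (u * v * w) -
        (f (w + u) (u + v) (v + w) * f (u + v) (v + w) (w + u) * (v + w) ^ 2 +
          f (u + v) (v + w) (w + u) * f (v + w) (w + u) (u + v) * (w + u) ^ 2 +
          f (v + w) (w + u) (u + v) * f (w + u) (u + v) (v + w) * (u + v) ^ 2) /
          weightSum f (v + w) (w + u) (u + v) ^ 2 := by
  have hA := dist_circumcenter_vertex_sq hu hv hw ha hb hc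
  have hB := dist_circumcenter_vertex_sq hv hw hu hb hc ha
  have hC := dist_circumcenter_vertex_sq hw hu hv hc ha hb
  rw [circumcenter_rotate, circumradiusSq_rotate] at hB
  rw [circumcenter_rotate, circumcenter_rotate, circumradiusSq_rotate, circumradiusSq_rotate] at hC
  rw [dist_sq _ ha hb hc hf, hA, hB, hC, ← add_mul, ← add_mul]
  congr 1
  exact mul_div_cancel_left₀ _ hf

lemma dist_circumcenter_incenter_sq :
    dist (circumcenter A B C) (incenter A B C) ^ 2 =
      incenterDistSq (u + v + w) (u * v + v * w + w * u) (u * v * w) := by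
  have hsum := weightSum_incenter u v w
  rw [incenter, dist_circumcenter_triangleCenter_sq hu hv hw ha hb hc (hsum ▸ by positivity), hsum,
    incenterDistSq, circumradiusSq]
  field_simp
  ring

lemma dist_circumcenter_gergonnePoint_sq :
    dist (circumcenter A B C) (gergonnePoint A B C) ^ 2 =
      gergonneDistSq (u + v + w) (u * v + v * w + w * u) (u * v * w) := by
  have hsum := weightSum_gergonnePoint u v w
  rw [gergonnePoint, dist_circumcenter_triangleCenter_sq hu hv hw ha hb hc (hsum ▸ by positivity),
    hsum, gergonneDistSq, circumradiusSq]
  field_simp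
  ring

lemma dist_circumcenter_incenter_le_dist_gergonnePoint :
    dist (circumcenter A B C) (incenter A B C) ≤
      dist (circumcenter A B C) (gergonnePoint A B C) := by
  refine (sq_le_sq₀ dist_nonneg dist_nonneg).1 ?_
  rw [dist_circumcenter_incenter_sq hu hv hw ha hb hc,
    dist_circumcenter_gergonnePoint_sq hu hv hw ha hb hc]
  exact incenterDistSq_le_gergonneDistSq (by positivity) (by positivity) (by positivity)
    (nine_mul_prod_le_sum_mul_sum_mul hu.le hv.le hw.le)
    (three_mul_sum_mul_prod_le_sq_sum_mul u v w)

lemma dist_circumcenter_gergonnePoint_le_mul_dist_incenter :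
    dist (circumcenter A B C) (gergonnePoint A B C) ≤
      (7 - 4 * √2) * dist (circumcenter A B C) (incenter A B C) := by
  obtain ⟨s, hs, hle⟩ := exists_gergonneDistSq_le_isoscelesDistRatio_sq_mul
    (p := u + v + w) (q := u * v + v * w + w * u) (t := u * v * w)
    (by positivity) (by positivity) (by positivity)
    (nine_mul_prod_le_sum_mul_sum_mul hu.le hv.le hw.le) (cubicDiscr_nonneg_of_roots u v w)
  rw [← dist_circumcenter_incenter_sq hu hv hw ha hb hc,
    ← dist_circumcenter_gergonnePoint_sq hu hv hw ha hb hc, ← mul_pow] at hle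
  have hratio := isoscelesDistRatio_nonneg hs.le
  calc dist (circumcenter A B C) (gergonnePoint A B C)
      ≤ isoscelesDistRatio s * dist (circumcenter A B C) (incenter A B C) :=
        (sq_le_sq₀ dist_nonneg (by positivity)).1 hle
    _ ≤ (7 - 4 * √2) * dist (circumcenter A B C) (incenter A B C) := by
        gcongr
        exact isoscelesDistRatio_le hs.le

end TangentLengths

end triangleCenter

open triangleCenter in
theorem stmt_19_general {A B C : V} (h : AffineIndependent ℝ ![A, B, C]) :
    dist (ninePointCenter A B C) (spiekerCenter A B C) ≤
        dist (ninePointCenter A B C) (mittenpunkt A B C) ∧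
      dist (ninePointCenter A B C) (mittenpunkt A B C) ≤
        (7 - 4 * √2) * dist (ninePointCenter A B C) (spiekerCenter A B C) := by
  obtain ⟨u, v, w, hu, hv, hw, ha, hb, hc⟩ := exists_tangentLengths h
  have lower := dist_circumcenter_incenter_le_dist_gergonnePoint hu hv hw ha hb hc
  have upper := dist_circumcenter_gergonnePoint_le_mul_dist_incenter hu hv hw ha hb hc
  rw [dist_ninePointCenter_spiekerCenter hu hv hw ha hb hc,
    dist_ninePointCenter_mittenpunkt hu hv hw ha hb hc]
  constructor <;> linarith

end InnerProductSpace

theorem stmt_19 (A B C : EuclideanSpace ℝ (Fin 2))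
    (h : AffineIndependent ℝ ![A, B, C]) :
    dist (tcenter (fun a b c => b^4 + c^4 - a^2*b^2 - a^2*c^2 - 2*b^2*c^2) A B C) (tcenter (fun a b c => b + c) A B C) ≤ dist (tcenter (fun a b c => b^4 + c^4 - a^2*b^2 - a^2*c^2 - 2*b^2*c^2) A B C) (tcenter (fun a b c => a*(b + c - a)) A B C) ∧
      dist (tcenter (fun a b c => b^4 + c^4 - a^2*b^2 - a^2*c^2 - 2*b^2*c^2) A B C) (tcenter (fun a b c => a*(b + c - a)) A B C) ≤ (7 - 4 * Real.sqrt 2) * dist (tcenter (fun a b c => b^4 + c^4 - a^2*b^2 - a^2*c^2 - 2*b^2*c^2) A B C) (tcenter (fun a b c => b + c) A B C) := by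
  simp only [tcenter_eq_triangleCenter]
  exact stmt_19_general h
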